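/- Let γ and δ be real numbers with 0 < γ < 1 and 0 < δ < 1, let q > 0 be a real number, and let m be a natural number. Then the map k ↦ γ^{k} · q · (1 − (γδ)^{m-k}) / (1 − γδ) is strictly decreasing on {k ∈ ℕ : k ≤ m}; that is, for all natural numbers k < l ≤ m, γ^{l} q (1 − (γδ)^{m-l}) < γ^{k} q (1 − (γδ)^{m-k}). -/

import Mathlib

/-!
Summing the geometric series turns the reward into `q γ^k (1 + γδ + ⋯ + (γδ)^(m-k-1))`. Delaying the
purchase does not increase `γ^k` and removes positive terms from the sum.
-/

theorem strictMono_geom_sum {R : Type*} [Semiring R] [PartialOrder R] [IsStrictOrderedRing R]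
    {x : R} (hx : 0 < x) : StrictMono fun n : ℕ => ∑ i ∈ Finset.range n, x ^ i :=
  strictMono_nat_of_lt_succ fun n => by
    simpa only [Finset.sum_range_succ] using lt_add_of_pos_right _ (pow_pos hx n)

theorem strictAntiOn_pow_mul_geom_sum {R : Type*} [Semiring R] [PartialOrder R]
    [IsStrictOrderedRing R] {a x : R} (ha₀ : 0 < a) (ha₁ : a ≤ 1) (hx : 0 < x) (m : ℕ) :
    StrictAntiOn (fun k : ℕ => a ^ k * ∑ i ∈ Finset.range (m - k), x ^ i) {k : ℕ | k ≤ m} := by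
  intro k _ l hl hkl
  have geom_sum_nonneg : 0 ≤ ∑ i ∈ Finset.range (m - l), x ^ i :=
    Finset.sum_nonneg fun i _ => pow_nonneg hx.le i
  calc a ^ l * ∑ i ∈ Finset.range (m - l), x ^ i
      ≤ a ^ k * ∑ i ∈ Finset.range (m - l), x ^ i :=
        mul_le_mul_of_nonneg_right (pow_le_pow_of_le_one ha₀.le ha₁ hkl.le) geom_sum_nonneg
    _ < a ^ k * ∑ i ∈ Finset.range (m - k), x ^ i :=
        mul_lt_mul_of_pos_left (strictMono_geom_sum hx (tsub_lt_tsub_left_of_le hl hkl))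
          (pow_pos ha₀ k)

theorem buy_reward_strictAnti_general {K : Type*} [Field K] [LinearOrder K] [IsStrictOrderedRing K]
    {γ δ q : K} (hγ₀ : 0 < γ) (hγ₁ : γ ≤ 1) (hδ : 0 < δ) (hγδ : γ * δ ≠ 1) (hq : 0 < q) (m : ℕ) :
    StrictAntiOn (fun k : ℕ => γ ^ k * q * (1 - (γ * δ) ^ (m - k)) / (1 - γ * δ))
      {k : ℕ | k ≤ m} ∧
    (γ * δ < 1 → ∀ k l : ℕ, k < l → l ≤ m →
      γ ^ l * q * (1 - (γ * δ) ^ (m - l)) < γ ^ k * q * (1 - (γ * δ) ^ (m - k))) := by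
  have reward_eq (k : ℕ) : γ ^ k * q * (1 - (γ * δ) ^ (m - k)) / (1 - γ * δ) =
      q * (γ ^ k * ∑ i ∈ Finset.range (m - k), (γ * δ) ^ i) := by
    rw [← mul_neg_geom_sum, mul_left_comm, mul_div_cancel_left₀ _ (sub_ne_zero.2 hγδ.symm),
      mul_comm (γ ^ k), mul_assoc]
  have reward_strictAntiOn :
      StrictAntiOn (fun k : ℕ => γ ^ k * q * (1 - (γ * δ) ^ (m - k)) / (1 - γ * δ))
        {k : ℕ | k ≤ m} := by
    simp only [reward_eq]
    exact (strictMono_mul_left_of_pos hq).comp_strictAntiOn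
      (strictAntiOn_pow_mul_geom_sum hγ₀ hγ₁ (mul_pos hγ₀ hδ) m)
  refine ⟨reward_strictAntiOn, fun hlt k l hkl hl => ?_⟩
  exact (div_lt_div_iff_of_pos_right (sub_pos.2 hlt)).1
    (reward_strictAntiOn (hkl.le.trans hl) hl hkl)

/-- Key step of Lemma 1(1): the expected pre-upgrade reward
`γ^k q (1 − (γδ)^(m−k))/(1 − γδ)` of buying the base product at timestep `k`
is strictly decreasing in the purchase timestep `k ≤ m`. -/
theorem buy_reward_strictAnti (γ δ q : ℝ) (hγ0 : 0 < γ) (hγ1 : γ < 1)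
    (hδ0 : 0 < δ) (hδ1 : δ < 1) (hq : 0 < q) (m : ℕ) :
    StrictAntiOn (fun k : ℕ => γ ^ k * q * (1 - (γ * δ) ^ (m - k)) / (1 - γ * δ))
      {k : ℕ | k ≤ m} ∧
    ∀ k l : ℕ, k < l → l ≤ m →
      γ ^ l * q * (1 - (γ * δ) ^ (m - l)) < γ ^ k * q * (1 - (γ * δ) ^ (m - k)) := by
  have hγδ : γ * δ < 1 := mul_lt_one_of_nonneg_of_lt_one_left hγ0.le hγ1 hδ1.le
  exact (buy_reward_strictAnti_general hγ0 hγ1.le hδ0 hγδ.ne hq m).imp_right (· hγδ)
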